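/- For two parallel copies of the CHSH game, there exists a deterministic local strategy (functions α, β : {0,1}² → {0,1}²) whose winning probability equals 10/16, which is strictly greater than (3/4)² = 9/16. -/

import Mathlib

/-- For two parallel CHSH games there is a deterministic local strategy
winning with probability 10/16 > (3/4)². -/
theorem parallel_chsh_two_copies :
    ∃ α β : Fin 2 × Fin 2 → Fin 2 × Fin 2,
      ((Finset.univ.filter
        (fun p : (Fin 2 × Fin 2) × (Fin 2 × Fin 2) =>
          (α p.1).1 + (β p.2).1 = p.1.1 * p.2.1 ∧
          (α p.1).2 + (β p.2).2 = p.1.2 * p.2.2)).card : ℝ) / 16 = 10 / 16 ∧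
      (10 : ℝ) / 16 > (3 / 4) ^ 2 := by
  refine ⟨fun x => (0, x.1 * x.2), fun y => (y.1 * y.2, 0), ?_, by norm_num⟩
  have h : (Finset.univ.filter
        (fun p : (Fin 2 × Fin 2) × (Fin 2 × Fin 2) =>
          (0 : Fin 2) + p.2.1 * p.2.2 = p.1.1 * p.2.1 ∧
          p.1.1 * p.1.2 + (0 : Fin 2) = p.1.2 * p.2.2)).card = 10 := by decide
  have h' := congrArg (fun n : ℕ => (n : ℝ) / 16) h
  simpa only [Nat.cast_ofNat] using h'
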